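/- Let n ≥ 2, let m > 2, and let K₁, …, K_m ⊆ ℝⁿ be compact sets each with connected boundary. Then vol((∂K₁ + ⋯ + ∂K_m)/m) ≥ (vol(K₁)·⋯·vol(K_m))^{1/m}. -/

import Mathlib

open MeasureTheory Pointwise

/-!
A point `x` of `K + L` outside `∂K + ∂L` makes the boundaries of `K` and `x - L` disjoint. As these
are connected and `K` meets `x - L`, one of the two compact sets contains the other, so `x` lies in
the Minkowski difference of `K` and `-L` or in that of `L` and `-K`. If `K` and `L` have volume
radii `a` and `b`, the Brunn–Minkowski inequality bounds the volume of these differences by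
`|a - b| ^ d` and that of `K + L` from below by `(a + b) ^ d`. Hence the volume radius `v` of
`∂K + ∂L` satisfies `(a + b) ^ d ≤ v ^ d + |a - b| ^ d`, and `4 * a * b ≤ v ^ 2` because `2 ≤ d`.

Now add a further boundary `∂K` to the sum `S` of `m` boundaries, of volume radii `a` for `K`, `b`
for `S` and `v` for `∂K + S`. The points of `K + S` outside `∂K + S` lie in the Minkowski difference
of `K` and `-S`, which is null when `a ≤ b`. So `a + b ≤ v` if `a ≤ b`, and `4 * a * b ≤ v ^ 2` in
any case. By the AM-GM inequality `(m + 1) ^ (m + 1) * a * b ^ m ≤ m ^ m * v ^ (m + 1)`, which is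
the inductive step.
-/

open Set Module Filter
open scoped ENNReal Topology

lemma measure_le_measure_add {G : Type*} [AddGroup G] [MeasurableSpace G] (μ : Measure G)
    [μ.IsAddLeftInvariant] [MeasurableAdd G] {A : Set G} (hA : A.Nonempty) (B : Set G) :
    μ B ≤ μ (A + B) := by
  obtain ⟨a, ha⟩ := hA
  rw [← measure_vadd μ a B]
  exact measure_mono (vadd_set_subset_add ha)

section OneDimensional

lemma volume_add_volume_le_volume_add_of_isCompact {A B : Set ℝ} (hA : IsCompact A)
    (hB : IsCompact B) (hA₀ : A.Nonempty) (hB₀ : B.Nonempty) :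
    volume A + volume B ≤ volume (A + B) := by
  obtain ⟨a, ha, hmax⟩ := hA.exists_isGreatest hA₀
  obtain ⟨b, hb, hmin⟩ := hB.exists_isLeast hB₀
  have hsub : (b +ᵥ A) ∪ (a +ᵥ B) ⊆ A + B :=
    union_subset (add_comm B A ▸ vadd_set_subset_add hb) (vadd_set_subset_add ha)
  have hinter : (b +ᵥ A) ∩ (a +ᵥ B) ⊆ {a + b} := by
    rintro _ ⟨⟨x, hx, rfl⟩, y, hy, hxy⟩
    have hxa : x ≤ a := hmax hx
    have hby : b ≤ y := hmin hy
    simp only [vadd_eq_add, mem_singleton_iff] at hxy ⊢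
    linarith
  have hdisj : AEDisjoint volume (b +ᵥ A) (a +ᵥ B) := measure_mono_null hinter (by simp)
  calc volume A + volume B
      = volume ((b +ᵥ A) ∪ (a +ᵥ B)) := by
        rw [measure_union₀ (hB.measurableSet.const_vadd a).nullMeasurableSet hdisj,
          measure_vadd, measure_vadd]
    _ ≤ volume (A + B) := measure_mono hsub

lemma volume_add_volume_le_volume_add {A B : Set ℝ} (hA : MeasurableSet A) (hB : MeasurableSet B)
    (hA₀ : A.Nonempty) (hB₀ : B.Nonempty) : volume A + volume B ≤ volume (A + B) := by
  rcases eq_or_ne (volume A) 0 with hA_null | hA_pos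
  · rw [hA_null, zero_add]
    exact measure_le_measure_add volume hA₀ B
  rcases eq_or_ne (volume B) 0 with hB_null | hB_pos
  · rw [hB_null, add_zero, add_comm A]
    exact measure_le_measure_add volume hB₀ A
  refine le_of_forall_lt fun r hr ↦ ?_
  obtain ⟨s, hs, t, ht, hr_lt⟩ := ENNReal.exists_lt_add_of_lt_add hr hA_pos hB_pos
  obtain ⟨C, hCA, hC, hsC⟩ := hA.exists_lt_isCompact hs
  obtain ⟨D, hDB, hD, htD⟩ := hB.exists_lt_isCompact ht
  calc r < s + t := hr_lt
    _ ≤ volume C + volume D := add_le_add hsC.le htD.le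
    _ ≤ volume (C + D) := volume_add_volume_le_volume_add_of_isCompact hC hD
        (nonempty_of_measure_ne_zero hsC.ne_bot) (nonempty_of_measure_ne_zero htD.ne_bot)
    _ ≤ volume (A + B) := measure_mono (add_subset_add hCA hDB)

end OneDimensional

section PrekopaLeindler

lemma lintegral_eq_lintegral_measure_ofReal_lt {α : Type*} [MeasurableSpace α] (μ : Measure α)
    [SFinite μ] {f : α → ℝ≥0∞} (hf : Measurable f) :
    ∫⁻ x, f x ∂μ = ∫⁻ t in Ioi (0 : ℝ), μ {x | ENNReal.ofReal t < f x} := by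
  have hslice (c : ℝ≥0∞) : volume.restrict (Ioi (0 : ℝ)) {t | ENNReal.ofReal t < c} = c := by
    rw [Measure.restrict_apply (measurableSet_lt ENNReal.measurable_ofReal measurable_const)]
    rcases eq_or_ne c ⊤ with rfl | hc
    · simp
    · have : {t : ℝ | ENNReal.ofReal t < c} ∩ Ioi 0 = Ioo 0 c.toReal := by
        ext t
        simp only [mem_inter_iff, mem_ofPred_eq, mem_Ioi, mem_Ioo, and_comm (a := _ < c)]
        exact and_congr_right fun ht ↦ ENNReal.ofReal_lt_iff_lt_toReal ht.le hc
      simp [this, hc]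
  have hmeas : MeasurableSet {z : α × ℝ | ENNReal.ofReal z.2 < f z.1} :=
    measurableSet_lt (ENNReal.measurable_ofReal.comp measurable_snd) (hf.comp measurable_fst)
  calc ∫⁻ x, f x ∂μ
      = ∫⁻ x, volume.restrict (Ioi (0 : ℝ)) {t | ENNReal.ofReal t < f x} ∂μ := by
        simp only [hslice]
    _ = μ.prod (volume.restrict (Ioi 0)) {z | ENNReal.ofReal z.2 < f z.1} :=
        (Measure.prod_apply hmeas).symm
    _ = ∫⁻ t in Ioi (0 : ℝ), μ {x | ENNReal.ofReal t < f x} := Measure.prod_apply_symm hmeas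

variable {p q : ℝ}

lemma rpow_mul_rpow_le_ofReal_mul_add (hp : 0 < p) (hq : 0 < q) (hpq : p + q = 1) (x y : ℝ≥0∞) :
    x ^ p * y ^ q ≤ ENNReal.ofReal p * x + ENNReal.ofReal q * y := by
  have hconj : (p⁻¹).HolderConjugate q⁻¹ := Real.HolderConjugate.inv_inv hp hq hpq
  have young := ENNReal.young_inequality (x ^ p) (y ^ q) hconj
  rwa [ENNReal.rpow_rpow_inv hp.ne', ENNReal.rpow_rpow_inv hq.ne', ENNReal.div_eq_inv_mul,
    ENNReal.div_eq_inv_mul, ← ENNReal.ofReal_inv_of_pos (inv_pos.2 hp),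
    ← ENNReal.ofReal_inv_of_pos (inv_pos.2 hq), inv_inv, inv_inv] at young

lemma lt_rpow_mul_rpow (hp : 0 < p) (hq : 0 < q) (hpq : p + q = 1) {s x y : ℝ≥0∞} (hx : s < x)
    (hy : s < y) : s < x ^ p * y ^ q :=
  calc s = s ^ p * s ^ q := by
        rw [← ENNReal.rpow_add_of_nonneg _ _ hp.le hq.le, hpq, ENNReal.rpow_one]
    _ < x ^ p * y ^ q :=
        ENNReal.mul_lt_mul (ENNReal.rpow_lt_rpow hx hp) (ENNReal.rpow_lt_rpow hy hq)

variable {f g h : ℝ → ℝ≥0∞}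

lemma ofReal_mul_volume_superlevel_add_le (hp : 0 < p) (hq : 0 < q) (hpq : p + q = 1)
    (hf : Measurable f) (hg : Measurable g)
    (H : ∀ x y, f x ^ p * g y ^ q ≤ h (p • x + q • y)) {s : ℝ≥0∞} (hsf : s < ⨆ x, f x)
    (hsg : s < ⨆ x, g x) :
    ENNReal.ofReal p * volume {x | s < f x} + ENNReal.ofReal q * volume {x | s < g x} ≤
      volume {x | s < h x} := by
  have hvol {c : ℝ} (hc : 0 < c) (A : Set ℝ) :
      ENNReal.ofReal c * volume A = volume (c • A) := by
    simp [Measure.addHaar_smul, abs_of_pos hc]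
  have hsub : p • {x | s < f x} + q • {x | s < g x} ⊆ {x | s < h x} := by
    rintro _ ⟨_, ⟨x, hx, rfl⟩, _, ⟨y, hy, rfl⟩, rfl⟩
    exact (lt_rpow_mul_rpow hp hq hpq hx hy).trans_le (H x y)
  rw [hvol hp, hvol hq]
  exact (volume_add_volume_le_volume_add
    ((measurableSet_lt measurable_const hf).const_smul₀ p)
    ((measurableSet_lt measurable_const hg).const_smul₀ q)
    (Nonempty.smul_set (lt_iSup_iff.1 hsf)) (Nonempty.smul_set (lt_iSup_iff.1 hsg))).trans
    (measure_mono hsub)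

lemma ofReal_mul_lintegral_add_le_of_iSup_eq_one (hp : 0 < p) (hq : 0 < q) (hpq : p + q = 1)
    (hf : Measurable f) (hg : Measurable g) (hh : Measurable h)
    (H : ∀ x y, f x ^ p * g y ^ q ≤ h (p • x + q • y)) (hf₁ : ⨆ x, f x = 1)
    (hg₁ : ⨆ x, g x = 1) :
    ENNReal.ofReal p * (∫⁻ x, f x) + ENNReal.ofReal q * (∫⁻ x, g x) ≤ ∫⁻ x, h x := by
  have hmeas (f : ℝ → ℝ≥0∞) : Measurable fun t : ℝ ↦ volume {x | ENNReal.ofReal t < f x} :=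
    Antitone.measurable fun _ _ hst ↦ measure_mono fun _ hx ↦
      (ENNReal.ofReal_le_ofReal hst).trans_lt hx
  have hempty {f : ℝ → ℝ≥0∞} (hf₁ : ⨆ x, f x = 1) {t : ℝ} (ht : 1 ≤ t) :
      {x | ENNReal.ofReal t < f x} = ∅ :=
    eq_empty_of_forall_notMem fun x hx ↦
      (((ENNReal.one_le_ofReal.2 ht).trans_lt hx).trans_le (le_iSup f x)).ne' hf₁
  rw [lintegral_eq_lintegral_measure_ofReal_lt volume hf,
    lintegral_eq_lintegral_measure_ofReal_lt volume hg,
    lintegral_eq_lintegral_measure_ofReal_lt volume hh, ← lintegral_const_mul _ (hmeas f),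
    ← lintegral_const_mul _ (hmeas g), ← lintegral_add_left ((hmeas f).const_mul _)]
  refine lintegral_mono fun t ↦ ?_
  rcases lt_or_ge t 1 with ht | ht
  · have ht : ENNReal.ofReal t < 1 := ENNReal.ofReal_lt_one.2 ht
    exact ofReal_mul_volume_superlevel_add_le hp hq hpq hf hg H (ht.trans_eq hf₁.symm)
      (ht.trans_eq hg₁.symm)
  · simp [hempty hf₁ ht, hempty hg₁ ht]

lemma lintegral_rpow_mul_lintegral_rpow_le_of_iSup_ne_top (hp : 0 < p) (hq : 0 < q)
    (hpq : p + q = 1) (hf : Measurable f) (hg : Measurable g) (hh : Measurable h)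
    (H : ∀ x y, f x ^ p * g y ^ q ≤ h (p • x + q • y)) (hf_top : ⨆ x, f x ≠ ⊤)
    (hg_top : ⨆ x, g x ≠ ⊤) :
    (∫⁻ x, f x) ^ p * (∫⁻ x, g x) ^ q ≤ ∫⁻ x, h x := by
  rcases eq_or_ne (⨆ x, f x) 0 with hf_zero | hf_pos
  · simp [ENNReal.iSup_eq_zero.1 hf_zero, hp]
  rcases eq_or_ne (⨆ x, g x) 0 with hg_zero | hg_pos
  · simp [ENNReal.iSup_eq_zero.1 hg_zero, hq]
  set α := ⨆ x, f x
  set β := ⨆ x, g x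
  have hα : α ^ p ≠ 0 ∧ α ^ p ≠ ⊤ :=
    ⟨by simp [hf_pos, hp.le], ENNReal.rpow_ne_top_of_nonneg hp.le hf_top⟩
  have hβ : β ^ q ≠ 0 ∧ β ^ q ≠ ⊤ :=
    ⟨by simp [hg_pos, hq.le], ENNReal.rpow_ne_top_of_nonneg hq.le hg_top⟩
  have hγ : α ^ p * β ^ q ≠ 0 ∧ α ^ p * β ^ q ≠ ⊤ :=
    ⟨mul_ne_zero hα.1 hβ.1, ENNReal.mul_ne_top hα.2 hβ.2⟩
  have hdiv (u v : ℝ≥0∞) : (u / α) ^ p * (v / β) ^ q = u ^ p * v ^ q / (α ^ p * β ^ q) := by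
    rw [ENNReal.div_rpow_of_nonneg _ _ hp.le, ENNReal.div_rpow_of_nonneg _ _ hq.le,
      ENNReal.div_eq_inv_mul, ENNReal.div_eq_inv_mul, ENNReal.div_eq_inv_mul,
      ENNReal.mul_inv (.inl hα.1) (.inl hα.2), mul_mul_mul_comm]
  have hint {f : ℝ → ℝ≥0∞} (hf : Measurable f) (c : ℝ≥0∞) :
      ∫⁻ x, f x / c = (∫⁻ x, f x) / c := lintegral_mul_const c⁻¹ hf
  have key : (∫⁻ x, f x) ^ p * (∫⁻ x, g x) ^ q / (α ^ p * β ^ q) ≤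
      (∫⁻ x, h x) / (α ^ p * β ^ q) := by
    rw [← hdiv, ← hint hf, ← hint hg, ← hint hh]
    refine (rpow_mul_rpow_le_ofReal_mul_add hp hq hpq _ _).trans
      (ofReal_mul_lintegral_add_le_of_iSup_eq_one hp hq hpq (hf.div_const α) (hg.div_const β)
        (hh.div_const _) (fun x y ↦ ?_) ?_ ?_)
    · rw [hdiv]
      exact ENNReal.div_le_div_right (H x y) _
    · rw [← ENNReal.iSup_div, ENNReal.div_self hf_pos hf_top]
    · rw [← ENNReal.iSup_div, ENNReal.div_self hg_pos hg_top]
  exact (ENNReal.mul_le_mul_iff_left (ENNReal.inv_ne_zero.2 hγ.2) (ENNReal.inv_ne_top.2 hγ.1)).1 key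

lemma tendsto_lintegral_min_natCast {α : Type*} [MeasurableSpace α] {μ : Measure α}
    {f : α → ℝ≥0∞} (hf : Measurable f) :
    Tendsto (fun k : ℕ ↦ ∫⁻ x, min (f x) k ∂μ) atTop (𝓝 (∫⁻ x, f x ∂μ)) := by
  refine lintegral_tendsto_of_tendsto_of_monotone
    (fun k ↦ (hf.min measurable_const).aemeasurable)
    (.of_forall fun x i j hij ↦ min_le_min_left _ (by exact_mod_cast hij))
    (.of_forall fun x ↦ ?_)
  simpa using (tendsto_const_nhds (x := f x)).min ENNReal.tendsto_nat_nhds_top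

variable {E F : Type*} [AddCommGroup E] [Module ℝ E] [MeasurableSpace E]
  [AddCommGroup F] [Module ℝ F] [MeasurableSpace F]

/-- The **Prékopa–Leindler inequality** with weights `p` and `q` holds for the measure `μ`. Stated
as a property of `μ` so that it can be transported along products and linear maps. -/
def SatisfiesPrekopaLeindler (p q : ℝ) (μ : Measure E) : Prop :=
  ∀ ⦃f g h : E → ℝ≥0∞⦄, Measurable f → Measurable g → Measurable h →
    (∀ x y, f x ^ p * g y ^ q ≤ h (p • x + q • y)) →
    (∫⁻ x, f x ∂μ) ^ p * (∫⁻ x, g x ∂μ) ^ q ≤ ∫⁻ x, h x ∂μ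

namespace SatisfiesPrekopaLeindler

lemma volume_real (hp : 0 < p) (hq : 0 < q) (hpq : p + q = 1) :
    SatisfiesPrekopaLeindler p q (volume : Measure ℝ) := by
  intro f g h hf hg hh H
  rcases eq_or_ne (∫⁻ x, f x) 0 with hf_zero | hf_pos
  · simp [hf_zero, hp]
  rcases eq_or_ne (∫⁻ x, g x) 0 with hg_zero | hg_pos
  · simp [hg_zero, hq]
  have hlim := ENNReal.Tendsto.mul
    ((tendsto_lintegral_min_natCast (μ := volume) hf).ennrpow_const p)
    (.inl (by simp [hp, hp.le, hf_pos]))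
    ((tendsto_lintegral_min_natCast (μ := volume) hg).ennrpow_const q)
    (.inl (by simp [hq, hq.le, hg_pos]))
  have hbdd (f : ℝ → ℝ≥0∞) (k : ℕ) : ⨆ x, min (f x) k ≠ ⊤ :=
    ne_top_of_le_ne_top (ENNReal.natCast_ne_top k) (iSup_le fun _ ↦ min_le_right _ _)
  refine le_of_tendsto' hlim fun k ↦ lintegral_rpow_mul_lintegral_rpow_le_of_iSup_ne_top hp hq hpq
    (hf.min measurable_const) (hg.min measurable_const) hh (fun x y ↦ le_trans ?_ (H x y))
    (hbdd f k) (hbdd g k)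
  gcongr <;> exact min_le_left _ _

lemma prod {μ : Measure E} {ν : Measure F} [SFinite ν] (hμ : SatisfiesPrekopaLeindler p q μ)
    (hν : SatisfiesPrekopaLeindler p q ν) : SatisfiesPrekopaLeindler p q (μ.prod ν) := by
  intro f g h hf hg hh H
  rw [lintegral_prod f hf.aemeasurable, lintegral_prod g hg.aemeasurable,
    lintegral_prod h hh.aemeasurable]
  exact hμ hf.lintegral_prod_right' hg.lintegral_prod_right' hh.lintegral_prod_right'
    fun x x' ↦ hν (hf.comp measurable_prodMk_left) (hg.comp measurable_prodMk_left)
      (hh.comp measurable_prodMk_left) fun y y' ↦ H (x, y) (x', y')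

lemma of_measurePreserving {μ : Measure E} {ν : Measure F} (hμ : SatisfiesPrekopaLeindler p q μ)
    (e : E →ₗ[ℝ] F) (he : MeasurePreserving e μ ν) : SatisfiesPrekopaLeindler p q ν := by
  intro f g h hf hg hh H
  rw [← he.lintegral_comp hf, ← he.lintegral_comp hg, ← he.lintegral_comp hh]
  refine hμ (hf.comp he.measurable) (hg.comp he.measurable) (hh.comp he.measurable) fun x y ↦ ?_
  simpa using H (e x) (e y)

lemma smul (hp : 0 ≤ p) (hq : 0 ≤ q) (hpq : p + q = 1) {μ : Measure E}
    (hμ : SatisfiesPrekopaLeindler p q μ) (c : ℝ≥0∞) : SatisfiesPrekopaLeindler p q (c • μ) := by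
  intro f g h hf hg hh H
  simp only [lintegral_smul_measure, smul_eq_mul]
  calc (c * ∫⁻ x, f x ∂μ) ^ p * (c * ∫⁻ x, g x ∂μ) ^ q
      = c ^ (p + q) * ((∫⁻ x, f x ∂μ) ^ p * (∫⁻ x, g x ∂μ) ^ q) := by
        rw [ENNReal.mul_rpow_of_nonneg _ _ hp, ENNReal.mul_rpow_of_nonneg _ _ hq,
          mul_mul_mul_comm, ENNReal.rpow_add_of_nonneg _ _ hp hq]
    _ ≤ c * ∫⁻ x, h x ∂μ := by
        rw [hpq, ENNReal.rpow_one]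
        gcongr
        exact hμ hf hg hh H

lemma volume_pi (hp : 0 < p) (hq : 0 < q) (hpq : p + q = 1) (n : ℕ) :
    SatisfiesPrekopaLeindler p q (volume : Measure (Fin n → ℝ)) := by
  induction n with
  | zero =>
    intro f g h _ _ _ H
    have hvol : volume (univ : Set (Fin 0 → ℝ)) = 1 := by
      rw [MeasureTheory.volume_pi, Measure.pi_univ, Finset.univ_eq_empty, Finset.prod_empty]
    simp only [lintegral_unique, hvol, mul_one]
    exact (H _ _).trans_eq (congrArg h (Subsingleton.elim _ _))
  | succ n ih =>
    let e := Fin.consLinearEquiv ℝ fun _ : Fin (n + 1) ↦ ℝ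
    have he : ⇑e = (MeasurableEquiv.piFinSuccAbove (fun _ : Fin (n + 1) ↦ ℝ) 0).symm :=
      congrArg (⇑) (Fin.insertNthEquiv_zero fun _ : Fin (n + 1) ↦ ℝ).symm
    have he_vol : MeasurePreserving e (volume.prod volume) volume :=
      he ▸ (volume_preserving_piFinSuccAbove (fun _ ↦ ℝ) 0).symm
    exact ((volume_real hp hq hpq).prod ih).of_measurePreserving e.toLinearMap he_vol

end SatisfiesPrekopaLeindler

theorem satisfiesPrekopaLeindler_of_isAddHaarMeasure {E : Type*} [NormedAddCommGroup E]
    [NormedSpace ℝ E] [FiniteDimensional ℝ E] [MeasurableSpace E] [BorelSpace E] (hp : 0 < p)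
    (hq : 0 < q) (hpq : p + q = 1) (μ : Measure E) [μ.IsAddHaarMeasure] :
    SatisfiesPrekopaLeindler p q μ := by
  let e : (Fin (finrank ℝ E) → ℝ) ≃L[ℝ] E := (finBasis ℝ E).equivFunL.symm
  have : (volume.map e).IsAddHaarMeasure := e.isAddHaarMeasure_map volume
  have hmap : SatisfiesPrekopaLeindler p q (volume.map e) :=
    (SatisfiesPrekopaLeindler.volume_pi hp hq hpq _).of_measurePreserving e.toLinearMap
      (e.continuous.measurable.measurePreserving volume)
  rw [Measure.isAddLeftInvariant_eq_smul μ (volume.map e)]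
  exact hmap.smul hp.le hq.le hpq _

end PrekopaLeindler

section Topology

variable {X : Type*} [TopologicalSpace X] {K L S T : Set X}

lemma isConnected_add [Add X] [ContinuousAdd X] (hS : IsConnected S) (hT : IsConnected T) :
    IsConnected (S + T) := by
  rw [← add_image_prod]
  exact (hS.prod hT).image _ continuous_add.continuousOn

lemma isConnected_sum [AddCommMonoid X] [ContinuousAdd X] {ι : Type*} {s : Finset ι}
    {f : ι → Set X} (hf : ∀ i ∈ s, IsConnected (f i)) : IsConnected (∑ i ∈ s, f i) :=
  Finset.sum_induction f IsConnected (fun _ _ ↦ isConnected_add) isConnected_singleton hf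

lemma isCompact_sum [AddCommMonoid X] [ContinuousAdd X] {ι : Type*} {s : Finset ι}
    {f : ι → Set X} (hf : ∀ i ∈ s, IsCompact (f i)) : IsCompact (∑ i ∈ s, f i) :=
  Finset.sum_induction f IsCompact (fun _ _ ↦ IsCompact.add) isCompact_singleton hf

lemma isCompact_frontier [T2Space X] (hK : IsCompact K) : IsCompact (frontier K) :=
  hK.of_isClosed_subset isClosed_frontier hK.isClosed.frontier_subset

lemma subset_interior_of_disjoint_frontier (hT : IsPreconnected T)
    (hTK : Disjoint T (frontier K)) (hne : (T ∩ K).Nonempty) : T ⊆ interior K := by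
  obtain ⟨x, hxT, hxK⟩ := hne
  have hcover : T ⊆ interior K ∪ interior Kᶜ :=
    hTK.subset_compl_right.trans_eq compl_frontier_eq_union_interior
  have hdisj : Disjoint (interior K) (interior Kᶜ) :=
    disjoint_compl_right.mono interior_subset interior_subset
  have hx : x ∈ interior K :=
    (mem_interior_iff_notMem_frontier hxK).2 (disjoint_left.1 hTK hxT)
  exact hT.subset_left_of_subset_union isOpen_interior isOpen_interior hdisj hcover ⟨x, hxT, hx⟩

lemma subset_interior_or_disjoint_of_disjoint_frontier (hT : IsPreconnected T)
    (hTK : Disjoint T (frontier K)) : T ⊆ interior K ∨ Disjoint T K :=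
  (disjoint_or_nonempty_inter T K).symm.imp_left (subset_interior_of_disjoint_frontier hT hTK)

variable [PreconnectedSpace X] [NoncompactSpace X]

lemma eq_empty_of_frontier_eq_empty (hK : IsCompact K) (hTK : T ⊆ K) (hT : frontier T = ∅) :
    T = ∅ := by
  refine (frontier_eq_empty_iff.1 hT).resolve_right ?_
  rintro rfl
  exact noncompact_univ X (univ_subset_iff.1 hTK ▸ hK)

variable [T2Space X]

lemma subset_of_frontier_subset_interior (hK : IsCompact K) (hKL : frontier K ⊆ interior L)
    (hLK : Disjoint (frontier L) K) : K ⊆ L := by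
  refine sdiff_eq_empty.1 (eq_empty_of_frontier_eq_empty hK sdiff_subset ?_)
  refine subset_empty_iff.1 ((frontier_inter_subset K Lᶜ).trans (union_subset ?_ ?_))
  · rw [closure_compl]
    exact fun x hx ↦ hx.2 (hKL hx.1)
  · rw [frontier_compl, hK.isClosed.closure_eq]
    exact hLK.symm.le_bot

lemma subset_or_subset_of_disjoint_frontier (hK : IsCompact K) (hL : IsCompact L)
    (hfK : IsPreconnected (frontier K)) (hfL : IsPreconnected (frontier L))
    (hfKL : Disjoint (frontier K) (frontier L)) (hKL : (K ∩ L).Nonempty) : K ⊆ L ∨ L ⊆ K := by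
  rcases subset_interior_or_disjoint_of_disjoint_frontier hfK hfKL with hK_in | hK_off <;>
    rcases subset_interior_or_disjoint_of_disjoint_frontier hfL hfKL.symm with hL_in | hL_off
  · have hunion : frontier (K ∪ L) ⊆ ∅ := by
      refine (frontier_union_subset K L).trans (union_subset ?_ ?_) <;> rw [closure_compl]
      · exact fun x hx ↦ hx.2 (hK_in hx.1)
      · exact fun x hx ↦ hx.1 (hL_in hx.2)
    have hempty : K ∪ L = ∅ :=
      eq_empty_of_frontier_eq_empty (hK.union hL) Subset.rfl (subset_empty_iff.1 hunion)
    exact .inl (subset_union_left.trans (hempty.trans_subset (empty_subset L)))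
  · exact .inl (subset_of_frontier_subset_interior hK hK_in hL_off)
  · exact .inr (subset_of_frontier_subset_interior hL hL_in hK_off)
  · have hinter : frontier (K ∩ L) ⊆ ∅ := by
      refine (frontier_inter_subset K L).trans (union_subset ?_ ?_)
      · exact hL.isClosed.closure_eq.symm ▸ hK_off.le_bot
      · exact hK.isClosed.closure_eq.symm ▸ hL_off.symm.le_bot
    have hempty : K ∩ L = ∅ :=
      eq_empty_of_frontier_eq_empty hK inter_subset_left (subset_empty_iff.1 hinter)
    exact absurd hempty hKL.ne_empty

end Topology

section MinkowskiDifference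

/-- The Minkowski difference of `A` and `B`: the set of all translations carrying `B` into `A`. -/
def minkowskiDiff {G : Type*} [Add G] (A B : Set G) : Set G := {x | ∀ b ∈ B, x + b ∈ A}

lemma minkowskiDiff_add_subset {G : Type*} [Add G] (A B : Set G) : minkowskiDiff A B + B ⊆ A :=
  add_subset_iff.2 fun _ hx ↦ hx

variable {G : Type*} [AddCommGroup G] [TopologicalSpace G] [IsTopologicalAddGroup G]
  {A B K L S : Set G}

lemma isCompact_minkowskiDiff [T2Space G] (hA : IsCompact A) (hB : B.Nonempty) :
    IsCompact (minkowskiDiff A B) := by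
  have hclosed : IsClosed (minkowskiDiff A B) := by
    have : minkowskiDiff A B = ⋂ b ∈ B, (· + b) ⁻¹' A := by ext; simp [minkowskiDiff]
    rw [this]
    exact isClosed_biInter fun b _ ↦ hA.isClosed.preimage (continuous_add_const b)
  obtain ⟨b, hb⟩ := hB
  exact ((Homeomorph.addRight b).isCompact_preimage.2 hA).of_isClosed_subset hclosed
    fun x hx ↦ hx b hb

lemma add_subset_frontier_add_union_minkowskiDiff (K : Set G) (hS : IsPreconnected S) :
    K + S ⊆ (frontier K + S) ∪ minkowskiDiff K (-S) := by
  rintro _ ⟨k, hk, s, hs, rfl⟩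
  refine or_iff_not_imp_left.2 fun hnotMem b hb ↦ ?_
  have hdisj : Disjoint ((k + s - ·) '' S) (frontier K) := by
    rw [disjoint_left]
    rintro _ ⟨c, hc, rfl⟩ hfr
    exact hnotMem ⟨_, hfr, c, hc, sub_add_cancel _ _⟩
  have hsub : (k + s - ·) '' S ⊆ interior K :=
    subset_interior_of_disjoint_frontier (hS.image _ (by fun_prop)) hdisj
      ⟨k, ⟨s, hs, add_sub_cancel_right k s⟩, hk⟩
  simpa using interior_subset (hsub (mem_image_of_mem _ hb))

lemma add_subset_frontier_add_frontier_union_minkowskiDiff [T2Space G] [PreconnectedSpace G]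
    [NoncompactSpace G] (hK : IsCompact K) (hL : IsCompact L) (hfK : IsPreconnected (frontier K))
    (hfL : IsPreconnected (frontier L)) :
    K + L ⊆ (frontier K + frontier L) ∪ (minkowskiDiff K (-L) ∪ minkowskiDiff L (-K)) := by
  rintro _ ⟨k, hk, l, hl, rfl⟩
  refine or_iff_not_imp_left.2 fun hnotMem ↦ ?_
  let φ := Homeomorph.subLeft (k + l)
  have hfr : frontier (φ ⁻¹' L) = φ ⁻¹' frontier L := (φ.preimage_frontier L).symm
  have hdisj : Disjoint (frontier K) (frontier (φ ⁻¹' L)) := by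
    rw [hfr, disjoint_left]
    exact fun y hyK hyL ↦ hnotMem ⟨y, hyK, k + l - y, hyL, add_sub_cancel _ _⟩
  have hnested : K ⊆ φ ⁻¹' L ∨ φ ⁻¹' L ⊆ K :=
    subset_or_subset_of_disjoint_frontier hK (φ.isCompact_preimage.2 hL) hfK
      (hfr ▸ φ.isPreconnected_preimage.2 hfL) hdisj
      ⟨k, hk, by simpa [φ] using hl⟩
  rcases hnested with hKL | hLK
  · refine .inr fun b hb ↦ ?_
    simpa [φ] using hKL hb
  · refine .inl fun b hb ↦ hLK ?_
    simpa [φ] using hb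

end MinkowskiDifference

section BrunnMinkowski

lemma four_mul_le_sq_of_add_pow_le {d : ℕ} (hd : 2 ≤ d) {a b v : ℝ} (ha : 0 ≤ a) (hb : 0 ≤ b)
    (hv : 0 ≤ v) (h : (a + b) ^ d ≤ v ^ d + |a - b| ^ d) : 4 * a * b ≤ v ^ 2 := by
  by_contra! hlt
  have hsq : v ^ 2 + |a - b| ^ 2 < (a + b) ^ 2 := by
    rw [sq_abs]
    linarith [sq_nonneg (a + b), sq_nonneg (a - b)]
  have hab : 0 < a + b :=
    (add_nonneg ha hb).lt_of_ne' (sq_pos_iff.1 (lt_of_le_of_lt (by positivity) hsq))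
  have hbound {u : ℝ} (hu : 0 ≤ u) (huab : u ^ 2 ≤ (a + b) ^ 2) :
      u ^ d ≤ u ^ 2 * (a + b) ^ (d - 2) := by
    rw [← pow_mul_pow_sub u hd]
    gcongr
    exact (sq_le_sq₀ hu hab.le).1 huab
  refine h.not_gt ?_
  calc v ^ d + |a - b| ^ d
      ≤ v ^ 2 * (a + b) ^ (d - 2) + |a - b| ^ 2 * (a + b) ^ (d - 2) :=
        add_le_add (hbound hv (by linarith [sq_nonneg |a - b|]))
          (hbound (abs_nonneg _) (by linarith [sq_nonneg v]))
    _ = (v ^ 2 + |a - b| ^ 2) * (a + b) ^ (d - 2) := by ring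
    _ < (a + b) ^ 2 * (a + b) ^ (d - 2) := by gcongr
    _ = (a + b) ^ d := pow_mul_pow_sub _ hd

variable {E : Type*} [NormedAddCommGroup E] [NormedSpace ℝ E] [MeasurableSpace E] {μ : Measure E}
  {A B P Q : Set E}

/-- The volume radius of `A`: the factor by which a set of measure one has to be scaled to attain
the measure of `A`. The Brunn–Minkowski inequality says that it is superadditive. -/
noncomputable def volumeRadius (μ : Measure E) (A : Set E) : ℝ :=
  μ.real A ^ (finrank ℝ E : ℝ)⁻¹

lemma volumeRadius_nonneg : 0 ≤ volumeRadius μ A := Real.rpow_nonneg measureReal_nonneg _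

lemma volumeRadius_mono (hAB : μ A ≤ μ B) (hB : μ B ≠ ⊤) : volumeRadius μ A ≤ volumeRadius μ B :=
  Real.rpow_le_rpow measureReal_nonneg (ENNReal.toReal_mono hB hAB) (by positivity)

lemma volumeRadius_pow_finrank [FiniteDimensional ℝ E] [Nontrivial E] :
    volumeRadius μ A ^ finrank ℝ E = μ.real A :=
  Real.rpow_inv_natCast_pow measureReal_nonneg finrank_pos.ne'

variable [FiniteDimensional ℝ E] [BorelSpace E] [μ.IsAddHaarMeasure]

lemma volumeRadius_neg : volumeRadius μ (-A) = volumeRadius μ A := by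
  simp [volumeRadius, Measure.real]

lemma measure_rpow_mul_measure_rpow_le {p q : ℝ} (hp : 0 < p) (hq : 0 < q) (hpq : p + q = 1)
    (hA : IsCompact A) (hB : IsCompact B) : μ A ^ p * μ B ^ q ≤ μ (p • A + q • B) := by
  have hC : IsCompact (p • A + q • B) := (hA.smul p).add (hB.smul q)
  rw [← lintegral_indicator_one hA.measurableSet, ← lintegral_indicator_one hB.measurableSet,
    ← lintegral_indicator_one hC.measurableSet]
  refine satisfiesPrekopaLeindler_of_isAddHaarMeasure hp hq hpq μ
    (measurable_one.indicator hA.measurableSet) (measurable_one.indicator hB.measurableSet)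
    (measurable_one.indicator hC.measurableSet) fun x y ↦ ?_
  by_cases hx : x ∈ A
  · by_cases hy : y ∈ B
    · have : p • x + q • y ∈ p • A + q • B :=
        add_mem_add (smul_mem_smul_set hx) (smul_mem_smul_set hy)
      simp [hx, hy, this]
    · simp [hy, hq]
  · simp [hx, hp]

variable [Nontrivial E]

lemma volumeRadius_smul {c : ℝ} (hc : 0 ≤ c) (A : Set E) :
    volumeRadius μ (c • A) = c * volumeRadius μ A := by
  have hreal : μ.real (c • A) = c ^ finrank ℝ E * μ.real A := by
    simp [Measure.real, Measure.addHaar_smul, abs_of_nonneg hc, hc]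
  rw [volumeRadius, hreal, Real.mul_rpow (by positivity) measureReal_nonneg,
    Real.pow_rpow_inv_natCast hc finrank_pos.ne', volumeRadius]

lemma measure_inv_volumeRadius_smul (hA : 0 < volumeRadius μ A) :
    μ ((volumeRadius μ A)⁻¹ • A) = 1 := by
  rw [← ENNReal.toReal_eq_one_iff, ← measureReal_def, ← volumeRadius_pow_finrank,
    volumeRadius_smul (inv_nonneg.2 hA.le), inv_mul_cancel₀ hA.ne', one_pow]

theorem volumeRadius_add_le (hA : IsCompact A) (hB : IsCompact B) (hA₀ : A.Nonempty)
    (hB₀ : B.Nonempty) : volumeRadius μ A + volumeRadius μ B ≤ volumeRadius μ (A + B) := by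
  have hAB : IsCompact (A + B) := hA.add hB
  rcases (volumeRadius_nonneg (μ := μ) (A := A)).eq_or_lt' with ha | ha
  · rw [ha, zero_add]
    exact volumeRadius_mono (measure_le_measure_add μ hA₀ B) hAB.measure_ne_top
  rcases (volumeRadius_nonneg (μ := μ) (A := B)).eq_or_lt' with hb | hb
  · rw [hb, add_zero]
    exact volumeRadius_mono (add_comm B A ▸ measure_le_measure_add μ hB₀ A) hAB.measure_ne_top
  set a := volumeRadius μ A
  set b := volumeRadius μ B
  have hab : 0 < a + b := add_pos ha hb
  have hhomothetic : (a / (a + b)) • a⁻¹ • A + (b / (a + b)) • b⁻¹ • B = (a + b)⁻¹ • (A + B) := by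
    rw [smul_smul, smul_smul, smul_add]
    congr 2 <;> field_simp
  have hone : 1 ≤ μ ((a + b)⁻¹ • (A + B)) := by
    have h := measure_rpow_mul_measure_rpow_le (μ := μ) (div_pos ha hab) (div_pos hb hab)
      (by field_simp) (hA.smul a⁻¹) (hB.smul b⁻¹)
    rwa [hhomothetic, measure_inv_volumeRadius_smul ha, measure_inv_volumeRadius_smul hb,
      ENNReal.one_rpow, ENNReal.one_rpow, one_mul] at h
  have hradius : 1 ≤ (a + b)⁻¹ * volumeRadius μ (A + B) := by
    rw [← volumeRadius_smul (inv_nonneg.2 hab.le)]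
    refine Real.one_le_rpow ?_ (by positivity)
    exact ENNReal.toReal_mono (hAB.smul (a + b)⁻¹).measure_ne_top hone
  rwa [← div_eq_inv_mul, one_le_div hab] at hradius

lemma measureReal_minkowskiDiff_le (hA : IsCompact A) (hB : IsCompact B) (hB₀ : B.Nonempty) :
    μ.real (minkowskiDiff A B) ≤ max 0 (volumeRadius μ A - volumeRadius μ B) ^ finrank ℝ E := by
  rcases (minkowskiDiff A B).eq_empty_or_nonempty with hempty | hne
  · rw [hempty, measureReal_empty]
    positivity
  rw [← volumeRadius_pow_finrank]
  have hradius : volumeRadius μ (minkowskiDiff A B) + volumeRadius μ B ≤ volumeRadius μ A :=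
    (volumeRadius_add_le (isCompact_minkowskiDiff hA hB₀) hB hne hB₀).trans
      (volumeRadius_mono (measure_mono (minkowskiDiff_add_subset A B)) hA.measure_ne_top)
  exact pow_le_pow_left₀ volumeRadius_nonneg (le_max_of_le_right (le_sub_right_of_add_le hradius)) _

lemma volumeRadius_add_pow_le (hA : IsCompact A) (hB : IsCompact B) (hA₀ : A.Nonempty)
    (hB₀ : B.Nonempty) (hP : μ P ≠ ⊤) (hQ : μ Q ≠ ⊤) (h : A + B ⊆ P ∪ Q) :
    (volumeRadius μ A + volumeRadius μ B) ^ finrank ℝ E ≤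
      volumeRadius μ P ^ finrank ℝ E + μ.real Q :=
  calc (volumeRadius μ A + volumeRadius μ B) ^ finrank ℝ E
      ≤ volumeRadius μ (A + B) ^ finrank ℝ E :=
        pow_le_pow_left₀ (add_nonneg volumeRadius_nonneg volumeRadius_nonneg)
          (volumeRadius_add_le hA hB hA₀ hB₀) _
    _ = μ.real (A + B) := volumeRadius_pow_finrank
    _ ≤ μ.real (P ∪ Q) := measureReal_mono h (measure_union_ne_top hP hQ)
    _ ≤ μ.real P + μ.real Q := measureReal_union_le P Q
    _ = volumeRadius μ P ^ finrank ℝ E + μ.real Q := by rw [volumeRadius_pow_finrank]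

lemma volumeRadius_add_le_of_subset_union_minkowskiDiff (hA : IsCompact A) (hB : IsCompact B)
    (hA₀ : A.Nonempty) (hB₀ : B.Nonempty) (hP : μ P ≠ ⊤)
    (h : A + B ⊆ P ∪ minkowskiDiff A (-B)) (hAB : volumeRadius μ A ≤ volumeRadius μ B) :
    volumeRadius μ A + volumeRadius μ B ≤ volumeRadius μ P := by
  have hD : μ.real (minkowskiDiff A (-B)) ≤ 0 := by
    have := measureReal_minkowskiDiff_le (μ := μ) hA hB.neg hB₀.neg
    rwa [volumeRadius_neg, max_eq_left (sub_nonpos.2 hAB), zero_pow finrank_pos.ne'] at this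
  have hpow := volumeRadius_add_pow_le hA hB hA₀ hB₀ hP
    (isCompact_minkowskiDiff hA hB₀.neg).measure_ne_top h
  exact le_of_pow_le_pow_left₀ finrank_pos.ne' volumeRadius_nonneg (by linarith)

lemma four_mul_volumeRadius_le_sq (hdim : 2 ≤ finrank ℝ E) (hA : IsCompact A) (hB : IsCompact B)
    (hA₀ : A.Nonempty) (hB₀ : B.Nonempty) (hP : μ P ≠ ⊤)
    (h : A + B ⊆ P ∪ (minkowskiDiff A (-B) ∪ minkowskiDiff B (-A))) :
    4 * volumeRadius μ A * volumeRadius μ B ≤ volumeRadius μ P ^ 2 := by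
  have hDA := measureReal_minkowskiDiff_le (μ := μ) hA hB.neg hB₀.neg
  have hDB := measureReal_minkowskiDiff_le (μ := μ) hB hA.neg hA₀.neg
  rw [volumeRadius_neg] at hDA hDB
  have hpow := volumeRadius_add_pow_le hA hB hA₀ hB₀ hP (measure_union_ne_top
    (isCompact_minkowskiDiff hA hB₀.neg).measure_ne_top
    (isCompact_minkowskiDiff hB hA₀.neg).measure_ne_top) h
  refine four_mul_le_sq_of_add_pow_le hdim volumeRadius_nonneg volumeRadius_nonneg
    volumeRadius_nonneg (hpow.trans (add_le_add_right ?_ _))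
  refine (measureReal_union_le _ _).trans ((add_le_add hDA hDB).trans_eq ?_)
  rcases le_total (volumeRadius μ A) (volumeRadius μ B) with hab | hab
  · rw [max_eq_left (sub_nonpos.2 hab), max_eq_right (sub_nonneg.2 hab), abs_sub_comm,
      abs_of_nonneg (sub_nonneg.2 hab), zero_pow finrank_pos.ne', zero_add]
  · rw [max_eq_left (sub_nonpos.2 hab), max_eq_right (sub_nonneg.2 hab),
      abs_of_nonneg (sub_nonneg.2 hab), zero_pow finrank_pos.ne', add_zero]

end BrunnMinkowski

section GeometricMean

variable {m : ℕ} {R s v : ℝ}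

lemma succ_pow_succ_mul_le_pow_mul_add_pow (hm : m ≠ 0) (hR : 0 ≤ R) (hs : 0 ≤ s) :
    (m + 1 : ℝ) ^ (m + 1) * (R * s ^ m) ≤ m ^ m * (R + s) ^ (m + 1) := by
  rcases hs.eq_or_lt with rfl | hs
  · rw [zero_pow hm, mul_zero, mul_zero]
    positivity
  have hm₀ : (0 : ℝ) < m := by positivity
  -- Bernoulli's inequality for the ratio of the mean of `R, s / m, …, s / m` to `s / m`.
  have bernoulli : R * m / s ≤ ((R + s) * m / ((m + 1) * s)) ^ (m + 1) := by
    refine Eq.trans_le ?_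
      (one_add_mul_sub_le_pow (neg_one_lt_zero.le.trans (by positivity)) (m + 1))
    push_cast
    field_simp
    ring
  rw [div_pow, div_le_div_iff₀ hs (by positivity), mul_pow, mul_pow] at bernoulli
  refine le_of_mul_le_mul_right ?_ (mul_pos hm₀ hs)
  calc (m + 1 : ℝ) ^ (m + 1) * (R * s ^ m) * (m * s)
      = R * m * ((m + 1) ^ (m + 1) * s ^ (m + 1)) := by ring
    _ ≤ (R + s) ^ (m + 1) * m ^ (m + 1) * s := bernoulli
    _ = m ^ m * (R + s) ^ (m + 1) * (m * s) := by ring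

lemma two_pow_succ_mul_mul_pow_le (hm : m ≠ 0) (hs : 0 ≤ s) (hsR : s ≤ R) (hv : 0 ≤ v)
    (h : 4 * R * s ≤ v ^ 2) : 2 ^ (m + 1) * (R * s ^ m) ≤ v ^ (m + 1) := by
  have hR : 0 ≤ R := hs.trans hsR
  obtain ⟨k, rfl⟩ := Nat.exists_eq_succ_of_ne_zero hm
  have hg : √(R * s) ^ 2 = R * s := Real.sq_sqrt (by positivity)
  have hs_le : s ≤ √(R * s) := Real.le_sqrt_of_sq_le (by nlinarith)
  have hle_v : 2 * √(R * s) ≤ v :=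
    (sq_le_sq₀ (by positivity) hv).1 (by rw [mul_pow, hg]; linarith)
  calc 2 ^ (k + 2) * (R * s ^ (k + 1)) = 2 ^ (k + 2) * (√(R * s) ^ 2 * s ^ k) := by
        rw [hg]; ring
    _ ≤ 2 ^ (k + 2) * (√(R * s) ^ 2 * √(R * s) ^ k) := by gcongr
    _ = (2 * √(R * s)) ^ (k + 2) := by ring
    _ ≤ v ^ (k + 2) := by gcongr

lemma succ_pow_succ_mul_le_pow_mul_pow (hm : m ≠ 0) (hR : 0 ≤ R) (hs : 0 ≤ s) (hv : 0 ≤ v)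
    (hmul : 4 * R * s ≤ v ^ 2) (hadd : R ≤ s → R + s ≤ v) :
    (m + 1 : ℝ) ^ (m + 1) * (R * s ^ m) ≤ m ^ m * v ^ (m + 1) := by
  rcases le_total R s with hRs | hsR
  · refine (succ_pow_succ_mul_le_pow_mul_add_pow hm hR hs).trans ?_
    gcongr
    exact hadd hRs
  · have hconst : (m + 1 : ℝ) ^ (m + 1) ≤ m ^ m * 2 ^ (m + 1) := by
      simpa [one_add_one_eq_two] using
        succ_pow_succ_mul_le_pow_mul_add_pow hm zero_le_one zero_le_one
    calc (m + 1 : ℝ) ^ (m + 1) * (R * s ^ m) ≤ m ^ m * 2 ^ (m + 1) * (R * s ^ m) := by gcongr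
      _ = m ^ m * (2 ^ (m + 1) * (R * s ^ m)) := mul_assoc _ _ _
      _ ≤ m ^ m * v ^ (m + 1) := by
        gcongr
        exact two_pow_succ_mul_mul_pow_le hm hs hsR hv hmul

end GeometricMean

section BoundarySums

variable {E : Type*} [NormedAddCommGroup E] [NormedSpace ℝ E] [FiniteDimensional ℝ E]
  [MeasurableSpace E] [BorelSpace E] {μ : Measure E} [μ.IsAddHaarMeasure] {ι : Type*}
  {s : Finset ι} {K : ι → Set E}

lemma four_mul_volumeRadius_le_sq_frontier_add_frontier (hdim : 2 ≤ finrank ℝ E) {A B : Set E}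
    (hA : IsCompact A) (hB : IsCompact B) (hfA : IsConnected (frontier A))
    (hfB : IsConnected (frontier B)) :
    4 * volumeRadius μ A * volumeRadius μ B ≤ volumeRadius μ (frontier A + frontier B) ^ 2 := by
  have : Nontrivial E := nontrivial_of_finrank_pos (zero_lt_two.trans_le hdim)
  exact four_mul_volumeRadius_le_sq hdim hA hB (hfA.nonempty.mono hA.isClosed.frontier_subset)
    (hfB.nonempty.mono hB.isClosed.frontier_subset)
    ((isCompact_frontier hA).add (isCompact_frontier hB)).measure_ne_top
    (add_subset_frontier_add_frontier_union_minkowskiDiff hA hB hfA.isPreconnected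
      hfB.isPreconnected)

lemma succ_pow_succ_mul_volumeRadius_le_frontier_add (hdim : 2 ≤ finrank ℝ E) {A S : Set E}
    (hA : IsCompact A) (hS : IsCompact S) (hA₀ : A.Nonempty) (hS_conn : IsConnected S) {m : ℕ}
    (hm : m ≠ 0) :
    (m + 1 : ℝ) ^ (m + 1) * (volumeRadius μ A * volumeRadius μ S ^ m) ≤
      m ^ m * volumeRadius μ (frontier A + S) ^ (m + 1) := by
  have : Nontrivial E := nontrivial_of_finrank_pos (zero_lt_two.trans_le hdim)
  have hcover := add_subset_frontier_add_union_minkowskiDiff A hS_conn.isPreconnected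
  have hfin : μ (frontier A + S) ≠ ⊤ := ((isCompact_frontier hA).add hS).measure_ne_top
  exact succ_pow_succ_mul_le_pow_mul_pow hm volumeRadius_nonneg volumeRadius_nonneg
    volumeRadius_nonneg
    (four_mul_volumeRadius_le_sq hdim hA hS hA₀ hS_conn.nonempty hfin
      (hcover.trans (union_subset_union_right _ subset_union_left)))
    (volumeRadius_add_le_of_subset_union_minkowskiDiff hA hS hA₀ hS_conn.nonempty hfin hcover)

lemma card_pow_card_mul_prod_volumeRadius_le (hdim : 2 ≤ finrank ℝ E) (hs : 2 ≤ s.card)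
    (hK : ∀ i ∈ s, IsCompact (K i)) (hb : ∀ i ∈ s, IsConnected (frontier (K i))) :
    (s.card : ℝ) ^ s.card * ∏ i ∈ s, volumeRadius μ (K i) ≤
      volumeRadius μ (∑ i ∈ s, frontier (K i)) ^ s.card := by
  classical
  obtain ⟨m, hm⟩ : ∃ m, s.card = m := ⟨_, rfl⟩
  rw [hm] at hs ⊢
  induction m, hs using Nat.le_induction generalizing s with
  | base =>
    obtain ⟨i, j, hij, rfl⟩ := Finset.card_eq_two.1 hm
    simp only [Finset.mem_insert, Finset.mem_singleton, forall_eq_or_imp, forall_eq] at hK hb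
    rw [Finset.prod_pair hij, Finset.sum_pair hij]
    refine le_of_eq_of_le ?_
      (four_mul_volumeRadius_le_sq_frontier_add_frontier hdim hK.1 hK.2 hb.1 hb.2)
    push_cast
    ring
  | succ m hm₂ ih =>
    obtain ⟨i, t, hit, rfl, ht⟩ := Finset.card_eq_succ.1 hm
    simp only [Finset.forall_mem_insert] at hK hb
    have hm₀ : m ≠ 0 := by lia
    rw [Finset.prod_insert hit, Finset.sum_insert hit]
    set S := ∑ j ∈ t, frontier (K j)
    have hstep := succ_pow_succ_mul_volumeRadius_le_frontier_add (μ := μ) hdim hK.1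
      (isCompact_sum fun j hj ↦ isCompact_frontier (hK.2 j hj))
      (hb.1.nonempty.mono hK.1.isClosed.frontier_subset) (isConnected_sum hb.2) hm₀
    refine le_of_mul_le_mul_left ?_ (by positivity : (0 : ℝ) < m ^ m)
    calc (m : ℝ) ^ m * ((m + 1 : ℕ) ^ (m + 1) *
          (volumeRadius μ (K i) * ∏ j ∈ t, volumeRadius μ (K j)))
        = (m + 1) ^ (m + 1) *
            (volumeRadius μ (K i) * (m ^ m * ∏ j ∈ t, volumeRadius μ (K j))) := by
          push_cast
          ring
      _ ≤ (m + 1) ^ (m + 1) * (volumeRadius μ (K i) * volumeRadius μ S ^ m) := by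
          gcongr
          · exact volumeRadius_nonneg
          · exact ih hK.2 hb.2 ht
      _ ≤ m ^ m * volumeRadius μ (frontier (K i) + S) ^ (m + 1) := hstep

theorem multi_boundary_sum_average_lower_bound_general (μ : Measure E) [μ.IsAddHaarMeasure]
    (hdim : 2 ≤ finrank ℝ E) (hs : 2 ≤ s.card) (hK : ∀ i ∈ s, IsCompact (K i))
    (hb : ∀ i ∈ s, IsConnected (frontier (K i))) :
    (∏ i ∈ s, μ.real (K i)) ^ (s.card : ℝ)⁻¹ ≤
      μ.real ((s.card : ℝ)⁻¹ • ∑ i ∈ s, frontier (K i)) := by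
  have : Nontrivial E := nontrivial_of_finrank_pos (zero_lt_two.trans_le hdim)
  have hprod : ∏ i ∈ s, volumeRadius μ (K i) ≤
      volumeRadius μ ((s.card : ℝ)⁻¹ • ∑ i ∈ s, frontier (K i)) ^ s.card := by
    rw [volumeRadius_smul (by positivity), mul_pow, inv_pow, ← div_eq_inv_mul,
      le_div_iff₀' (by positivity)]
    exact card_pow_card_mul_prod_volumeRadius_le hdim hs hK hb
  have hprod_nonneg : 0 ≤ ∏ i ∈ s, volumeRadius μ (K i) :=
    Finset.prod_nonneg fun _ _ ↦ volumeRadius_nonneg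
  simp only [← volumeRadius_pow_finrank (μ := μ), Finset.prod_pow]
  rw [Real.rpow_inv_le_iff_of_pos (by positivity) (pow_nonneg volumeRadius_nonneg _)
    (by positivity), Real.rpow_natCast, pow_right_comm]
  gcongr

end BoundarySums

theorem multi_boundary_sum_average_lower_bound (n m : ℕ) (hn : 2 ≤ n) (hm : 2 < m)
    (K : Fin m → Set (EuclideanSpace ℝ (Fin n)))
    (hK : ∀ i, IsCompact (K i)) (hb : ∀ i, IsConnected (frontier (K i))) :
    (volume ((m:ℝ)⁻¹ • (∑ i, frontier (K i)))).toReal ≥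
      (∏ i, (volume (K i)).toReal) ^ ((1:ℝ)/m) := by
  simpa [Measure.real] using multi_boundary_sum_average_lower_bound_general
    (s := Finset.univ) volume (by simpa using hn) (by simpa using hm.le) (fun i _ ↦ hK i)
    (fun i _ ↦ hb i)
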